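/- Triangle: For all metrics mA, mB ∈ {diff, disc, bot, top}, all real numbers r1, r2, r3, and all extended real bounds qA, qB, if r1 ∼_{mA}^{qA} r2 and r2 ∼_{mB}^{qB} r3, then r1 ∼_{mA ⊔ mB}^{qA + qB} r3, where mA ⊔ mB is the join of the two metrics. -/

import Mathlib

/-- Metrics: `diff` (absolute difference), `disc` (discrete), `bot`, `top`. -/
inductive Metric : Type
  | diff | disc | bot | top
  deriving DecidableEq

/-- The join (least upper bound) of two metrics in the order generated by
`bot ⊑ diff ⊑ top` and `bot ⊑ disc ⊑ top`. -/
def Metric.join : Metric → Metric → Metric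
  | .bot, m => m
  | m, .bot => m
  | .diff, .diff => .diff
  | .disc, .disc => .disc
  | _, _ => .top

/-- The distance relation `r1 ∼_m^q r2` on reals, with extended real bound `q`. -/
def DistRel (m : Metric) (q : EReal) (r1 r2 : ℝ) : Prop :=
  match m with
  | .diff => ((|r1 - r2| : ℝ) : EReal) ≤ q
  | .disc => (r1 = r2 → (0 : EReal) ≤ q) ∧ (r1 ≠ r2 → (1 : EReal) ≤ q)
  | .bot  => (((|r1 - r2| : ℝ) : EReal) ≤ q) ∧
             ((r1 = r2 → (0 : EReal) ≤ q) ∧ (r1 ≠ r2 → (1 : EReal) ≤ q))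
  | .top  => (((|r1 - r2| : ℝ) : EReal) ≤ q) ∨
             ((r1 = r2 → (0 : EReal) ≤ q) ∧ (r1 ≠ r2 → (1 : EReal) ≤ q))

/-!
Each relation `∼_m^q` says that a distance `d_m` is at most `q`, where `d_bot` is the maximum and
`d_top` the minimum of the usual and the discrete distance. Passing to a larger metric decreases
`d_m`, so it is enough that every `d_m` satisfies the triangle inequality. A minimum of two
distances need not satisfy it, but `d_top` does because it is the truncation of the usual distance
at `1`.
-/

section Distances

variable {α : Type*}

open Classical in
/-- The discrete distance, the real number that `disc` compares with its bound. -/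
noncomputable def discreteDist (x y : α) : ℝ :=
  if x = y then 0 else 1

theorem coe_discreteDist_le_iff {x y : α} {q : EReal} :
    (discreteDist x y : EReal) ≤ q ↔ (x = y → 0 ≤ q) ∧ (x ≠ y → 1 ≤ q) := by
  by_cases hxy : x = y <;> simp [discreteDist, hxy]

theorem discreteDist_triangle (x y z : α) :
    discreteDist x z ≤ discreteDist x y + discreteDist y z := by
  unfold discreteDist
  split_ifs <;> simp_all

variable [PseudoMetricSpace α]

theorem min_dist_discreteDist (x y : α) :
    min (dist x y) (discreteDist x y) = min (dist x y) 1 := by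
  by_cases hxy : x = y <;> simp [discreteDist, hxy]

theorem min_dist_one_triangle (x y z : α) :
    min (dist x z) 1 ≤ min (dist x y) 1 + min (dist y z) 1 := by
  have hxy : 0 ≤ dist x y := dist_nonneg
  have hyz : 0 ≤ dist y z := dist_nonneg
  have hxz : dist x z ≤ dist x y + dist y z := dist_triangle x y z
  grind

/-- The distance `d_m` attached to a metric `m`, on an arbitrary pseudometric space whose own
distance plays the role of `diff`. A conjunction of upper bounds bounds a maximum and a disjunction
bounds a minimum, so `bot` is the largest distance and `top` the smallest. -/
noncomputable def metricDist (m : Metric) (x y : α) : ℝ :=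
  match m with
  | .diff => dist x y
  | .disc => discreteDist x y
  | .bot => max (dist x y) (discreteDist x y)
  | .top => min (dist x y) (discreteDist x y)

theorem metricDist_triangle (m : Metric) (x y z : α) :
    metricDist m x z ≤ metricDist m x y + metricDist m y z := by
  cases m with
  | diff => exact dist_triangle x y z
  | disc => exact discreteDist_triangle x y z
  | bot =>
    calc max (dist x z) (discreteDist x z)
        ≤ max (dist x y + dist y z) (discreteDist x y + discreteDist y z) :=
          max_le_max (dist_triangle x y z) (discreteDist_triangle x y z)
      _ ≤ max (dist x y) (discreteDist x y) + max (dist y z) (discreteDist y z) :=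
          max_add_add_le_max_add_max
  | top => simpa only [metricDist, min_dist_discreteDist] using min_dist_one_triangle x y z

theorem metricDist_join_le_left (mA mB : Metric) (x y : α) :
    metricDist (mA.join mB) x y ≤ metricDist mA x y := by
  cases mA <;> cases mB <;> simp [Metric.join, metricDist]

theorem metricDist_join_le_right (mA mB : Metric) (x y : α) :
    metricDist (mA.join mB) x y ≤ metricDist mB x y := by
  cases mA <;> cases mB <;> simp [Metric.join, metricDist]

theorem metricDist_join_triangle (mA mB : Metric) (x y z : α) :
    metricDist (mA.join mB) x z ≤ metricDist mA x y + metricDist mB y z :=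
  (metricDist_triangle (mA.join mB) x y z).trans <|
    add_le_add (metricDist_join_le_left mA mB x y) (metricDist_join_le_right mA mB y z)

theorem triangle_general (mA mB : Metric) (x y z : α) (qA qB : EReal)
    (hA : (metricDist mA x y : EReal) ≤ qA) (hB : (metricDist mB y z : EReal) ≤ qB) :
    (metricDist (mA.join mB) x z : EReal) ≤ qA + qB :=
  calc (metricDist (mA.join mB) x z : EReal)
      ≤ ((metricDist mA x y + metricDist mB y z : ℝ) : EReal) :=
        EReal.coe_le_coe (metricDist_join_triangle mA mB x y z)
    _ = metricDist mA x y + metricDist mB y z := EReal.coe_add _ _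
    _ ≤ qA + qB := add_le_add hA hB

end Distances

theorem distRel_iff_metricDist_le {m : Metric} {q : EReal} {r1 r2 : ℝ} :
    DistRel m q r1 r2 ↔ (metricDist m r1 r2 : EReal) ≤ q := by
  cases m <;>
    simp only [DistRel, metricDist, Real.dist_eq, EReal.coe_strictMono.monotone.map_max,
      EReal.coe_strictMono.monotone.map_min, max_le_iff, min_le_iff, coe_discreteDist_le_iff]

/-- Triangle: if `r1 ∼_{mA}^{qA} r2` and `r2 ∼_{mB}^{qB} r3`, then
`r1 ∼_{mA ⊔ mB}^{qA + qB} r3`. -/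
theorem triangle (mA mB : Metric) (r1 r2 r3 : ℝ) (qA qB : EReal)
    (hA : DistRel mA qA r1 r2) (hB : DistRel mB qB r2 r3) :
    DistRel (mA.join mB) (qA + qB) r1 r3 :=
  distRel_iff_metricDist_le.2 <| triangle_general mA mB r1 r2 r3 qA qB
    (distRel_iff_metricDist_le.1 hA) (distRel_iff_metricDist_le.1 hB)
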